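/- Let α_x > 0, α_p > 0, σ_μ ≥ 0, σ_ε > 0, set α_z = α_x²/(σ_ε²·(α_x + α_p²·σ_μ²)), α = α_x + α_p + α_z and α_ψ = α²/(α_x + α_p²·σ_μ²). If 1/√(2π) ≤ ((α_x + α_z)/α_x)·√(α_x/α_p² + σ_μ²), then for every S ∈ ℝ, every m ∈ ℝ and every c ∈ (0,1), there exists exactly one pair (θ, y) with θ ∈ (0,1), Φ(y) = θ, and Φ(√α·((α_p/α)·θ − (1/√α_ψ)·((α_x + α_z)/α_x)·y − ((α_x + α_z)·α_p/(α_x·α))·m + (α_z/α_x)·(1/√α_ψ)·S)) = c. -/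

import Mathlib

/-- The standard normal cumulative distribution function. -/
noncomputable def stdNormalCDF (x : ℝ) : ℝ :=
  ∫ t in Set.Iic x, (Real.sqrt (2 * Real.pi))⁻¹ * Real.exp (-t ^ 2 / 2)

open MeasureTheory ProbabilityTheory Filter Topology Set

theorem aux_pdf : (fun t : ℝ => (Real.sqrt (2 * Real.pi))⁻¹ * Real.exp (-t ^ 2 / 2)) =
    gaussianPDFReal 0 1 := by
  ext t; simp [gaussianPDFReal]

theorem aux_int : Integrable
    (fun t : ℝ => (Real.sqrt (2 * Real.pi))⁻¹ * Real.exp (-t ^ 2 / 2)) := by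
  rw [aux_pdf]; exact integrable_gaussianPDFReal 0 1

theorem aux_cdf (x : ℝ) : stdNormalCDF x = cdf (gaussianReal 0 1) x := by
  rw [cdf_eq_real, measureReal_def, gaussianReal_apply_eq_integral 0 one_ne_zero,
    ENNReal.toReal_ofReal (integral_nonneg fun t => gaussianPDFReal_nonneg 0 1 t), ← aux_pdf]
  rfl

theorem aux_deriv (x : ℝ) : HasDerivAt stdNormalCDF
    ((Real.sqrt (2 * Real.pi))⁻¹ * Real.exp (-x ^ 2 / 2)) x := by
  have hc : Continuous (fun t : ℝ => (Real.sqrt (2 * Real.pi))⁻¹ * Real.exp (-t ^ 2 / 2)) := by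
    fun_prop
  have h : stdNormalCDF = fun x => (∫ t in (0:ℝ)..x,
      (Real.sqrt (2 * Real.pi))⁻¹ * Real.exp (-t ^ 2 / 2)) + stdNormalCDF 0 := by
    ext y
    rw [← intervalIntegral.integral_Iic_sub_Iic aux_int.integrableOn aux_int.integrableOn]
    simp only [stdNormalCDF]; ring
  rw [h]
  exact (intervalIntegral.integral_hasDerivAt_right (hc.intervalIntegrable _ _)
    (hc.stronglyMeasurableAtFilter _ _) hc.continuousAt).add_const _

theorem aux_cont : Continuous stdNormalCDF :=
  continuous_iff_continuousAt.2 fun x => (aux_deriv x).continuousAt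

theorem aux_s : 0 < (Real.sqrt (2 * Real.pi))⁻¹ := by positivity

theorem aux_mono : StrictMono stdNormalCDF := by
  apply strictMono_of_deriv_pos
  intro x
  rw [(aux_deriv x).deriv]
  have := aux_s
  positivity

theorem aux_bot : Tendsto stdNormalCDF atBot (𝓝 0) := by
  rw [funext aux_cdf]; exact tendsto_cdf_atBot _

theorem aux_top : Tendsto stdNormalCDF atTop (𝓝 1) := by
  rw [funext aux_cdf]; exact tendsto_cdf_atTop _

theorem aux_nonneg (x : ℝ) : 0 ≤ stdNormalCDF x := by
  rw [aux_cdf]; exact cdf_nonneg _ _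

theorem aux_le_one (x : ℝ) : stdNormalCDF x ≤ 1 := by
  rw [aux_cdf]; exact cdf_le_one _ _

theorem aux_mem (x : ℝ) : stdNormalCDF x ∈ Ioo (0:ℝ) 1 :=
  ⟨(aux_nonneg (x-1)).trans_lt (aux_mono (by linarith)),
   (aux_mono (by linarith : x < x+1)).trans_le (aux_le_one _)⟩

theorem aux_surj (c : ℝ) (hc : c ∈ Ioo (0:ℝ) 1) : ∃ x, stdNormalCDF x = c := by
  obtain ⟨a, ha⟩ := (aux_bot.eventually (gt_mem_nhds hc.1)).exists
  obtain ⟨b, hb⟩ := (aux_top.eventually (lt_mem_nhds hc.2)).exists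
  exact mem_range_of_exists_le_of_exists_ge aux_cont ⟨a, ha.le⟩ ⟨b, hb.le⟩

theorem aux_G : StrictMono fun y => (Real.sqrt (2 * Real.pi))⁻¹ * y - stdNormalCDF y := by
  have hd : ∀ x, HasDerivAt (fun y => (Real.sqrt (2 * Real.pi))⁻¹ * y - stdNormalCDF y)
      ((Real.sqrt (2 * Real.pi))⁻¹ * 1 -
        (Real.sqrt (2 * Real.pi))⁻¹ * Real.exp (-x ^ 2 / 2)) x := fun x =>
    ((hasDerivAt_id x).const_mul _).sub (aux_deriv x)
  have hcont : Continuous (fun y => (Real.sqrt (2 * Real.pi))⁻¹ * y - stdNormalCDF y) :=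
    continuous_iff_continuousAt.2 fun x => (hd x).continuousAt
  have hp : ∀ x : ℝ, x ≠ 0 →
      0 < deriv (fun y => (Real.sqrt (2 * Real.pi))⁻¹ * y - stdNormalCDF y) x := by
    intro x hx
    rw [(hd x).deriv, ← mul_sub]
    apply mul_pos aux_s
    have : Real.exp (-x ^ 2 / 2) < 1 := by
      rw [Real.exp_lt_one_iff]
      have : 0 < x ^ 2 := by positivity
      linarith
    linarith
  apply StrictMonoOn.Iic_union_Ici (a := (0:ℝ))
  · apply strictMonoOn_of_deriv_pos (convex_Iic 0) hcont.continuousOn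
    intro x hx
    rw [interior_Iic] at hx
    exact hp x (ne_of_lt hx)
  · apply strictMonoOn_of_deriv_pos (convex_Ici 0) hcont.continuousOn
    intro x hx
    rw [interior_Ici] at hx
    exact hp x (ne_of_gt hx)

theorem aux_F (a B : ℝ) (ha : 0 < a) (hB : a * (Real.sqrt (2 * Real.pi))⁻¹ ≤ B) (w : ℝ) :
    ∃! y, a * stdNormalCDF y - B * y = w := by
  have hB0 : 0 < B := lt_of_lt_of_le (mul_pos ha aux_s) hB
  have hanti : StrictAnti fun y => a * stdNormalCDF y - B * y := by
    intro y z hyz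
    have h1 := mul_lt_mul_of_pos_left (aux_G hyz) ha
    have h2 := mul_le_mul_of_nonneg_right hB (sub_nonneg.2 hyz.le)
    simp only at h1 ⊢
    nlinarith
  have hc : Continuous fun y => a * stdNormalCDF y - B * y := by
    have := aux_cont
    fun_prop
  obtain ⟨y, hy⟩ : w ∈ range (fun y => a * stdNormalCDF y - B * y) := by
    refine mem_range_of_exists_le_of_exists_ge hc ⟨(a - w) / B, ?_⟩ ⟨-w / B, ?_⟩
    · have := aux_le_one ((a - w) / B)
      rw [mul_div_cancel₀ _ hB0.ne']
      nlinarith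
    · have := aux_nonneg (-w / B)
      rw [mul_div_cancel₀ _ hB0.ne']
      nlinarith
  exact ⟨y, hy, fun z hz => hanti.injective (hz.trans hy.symm)⟩

theorem stmt_11 (αx αp σμ σε : ℝ) (hαx : 0 < αx) (hαp : 0 < αp) (hσμ : 0 ≤ σμ)
    (hσε : 0 < σε)
    (αz α αψ : ℝ) (hαz : αz = αx ^ 2 / (σε ^ 2 * (αx + αp ^ 2 * σμ ^ 2)))
    (hα : α = αx + αp + αz) (hαψ : αψ = α ^ 2 / (αx + αp ^ 2 * σμ ^ 2))
    (h : 1 / Real.sqrt (2 * Real.pi) ≤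
      ((αx + αz) / αx) * Real.sqrt (αx / αp ^ 2 + σμ ^ 2)) :
    ∀ S m : ℝ, ∀ c ∈ Set.Ioo (0 : ℝ) 1,
      ∃! p : ℝ × ℝ,
        p.1 ∈ Set.Ioo (0 : ℝ) 1 ∧ stdNormalCDF p.2 = p.1 ∧
        stdNormalCDF (Real.sqrt α *
          ((αp / α) * p.1 - (1 / Real.sqrt αψ) * ((αx + αz) / αx) * p.2 -
            ((αx + αz) * αp / (αx * α)) * m +
            (αz / αx) * (1 / Real.sqrt αψ) * S)) = c := by
  intro S m c hc
  have hD : 0 < αx + αp ^ 2 * σμ ^ 2 := by positivity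
  have hαz0 : 0 < αz := by rw [hαz]; positivity
  have hα0 : 0 < α := by rw [hα]; positivity
  have hk : 0 < (αx + αz) / αx := by positivity
  have e1 : Real.sqrt αψ = α / Real.sqrt (αx + αp ^ 2 * σμ ^ 2) := by
    rw [hαψ, Real.sqrt_div (by positivity), Real.sqrt_sq hα0.le]
  have e2 : Real.sqrt (αx / αp ^ 2 + σμ ^ 2) = Real.sqrt (αx + αp ^ 2 * σμ ^ 2) / αp := by
    rw [show αx / αp ^ 2 + σμ ^ 2 = (αx + αp ^ 2 * σμ ^ 2) / αp ^ 2 by field_simp,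
      Real.sqrt_div hD.le, Real.sqrt_sq hαp.le]
  have hB : αp / α * (Real.sqrt (2 * Real.pi))⁻¹ ≤ (1 / Real.sqrt αψ) * ((αx + αz) / αx) := by
    rw [e2, one_div] at h
    have h3 := mul_le_mul_of_nonneg_left h (by positivity : 0 ≤ αp / α)
    refine h3.trans_eq ?_
    rw [e1, one_div_div]
    field_simp
  obtain ⟨x, hx⟩ := aux_surj c hc
  have hs : 0 < Real.sqrt α := Real.sqrt_pos.2 hα0
  obtain ⟨y, hy, hu⟩ := aux_F (αp / α) _ (by positivity) hB
    (x / Real.sqrt α + ((αx + αz) * αp / (αx * α)) * m - (αz / αx) * (1 / Real.sqrt αψ) * S)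
  refine ⟨(stdNormalCDF y, y), ⟨aux_mem y, rfl, ?_⟩, ?_⟩
  · simp only at hy ⊢
    rw [hy, ← hx]
    congr 1
    rw [show ∀ u v w : ℝ, u + v - w - v + w = u by intros; ring, mul_div_cancel₀ _ hs.ne']
  · rintro ⟨t, z⟩ ⟨_, h2, h3⟩
    simp only at h2 h3
    subst h2
    rw [← hx] at h3
    have h4 := aux_mono.injective h3
    have : z = y := by
      apply hu
      rw [← h4, mul_div_cancel_left₀ _ hs.ne']
      ring
    rw [this]
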